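/- arXiv:1604.05439 — 2 statements merged into one kernel-verified Lean document; each statement's English description precedes it below -/
import Mathlib

section
/- Let r ∈ ℕ with r ≥ 2, n ∈ ℕ, and m = (m₁, …, m_n) ∈ ℕⁿ with gcd(m_i, r) = 1 for all i. In the graph L_{2n−1} ×_m ℤ_r: (i) for each i, j with i + 1 ≤ j ≤ n, the number of 1-step 0-simple paths from (v_i, 0) to (v_j, 0) is exactly r; (ii) for each i, j with i + 2 ≤ j ≤ n, the number of 2-step 0-simple paths from (v_i, 0) to (v_j, 0) is exactly (r(r−1)/2)·(j − i − 1); consequently, for each i with i + 2 ≤ n, the total number of 0-simple paths from (v_i, 0) to (v_{i+2}, 0) is r(r+1)/2. -/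
namespace QL

/-- Edges of the graph `L_{2n−1} ×_m ℤ_r`: a pair `(i,j)` with `i ≤ j` (the edge
`e_{i,j}` of `L_{2n−1}`) together with an element `k` of `ℤ_r`. -/
abbrev Edge (n r : ℕ) := {p : Fin n × Fin n // p.1 ≤ p.2} × ZMod r

/-- The source of the edge `(e_{i,j}, k)` is `(v_i, k − m_i)`. -/
def esrc (n r : ℕ) (m : Fin n → ℕ) (e : Edge n r) : Fin n × ZMod r :=
  (e.1.1.1, e.2 - (m e.1.1.1 : ZMod r))

/-- The range of the edge `(e_{i,j}, k)` is `(v_j, k)`. -/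
def ern (n r : ℕ) (e : Edge n r) : Fin n × ZMod r :=
  (e.1.1.2, e.2)

/-- A list of edges is a path if consecutive edges are composable. -/
def IsQPath (n r : ℕ) (m : Fin n → ℕ) (p : List (Edge n r)) : Prop :=
  List.Chain' (fun e f => ern n r e = esrc n r m f) p

/-- A path `(e_{i₁,j₁},k₁)⋯(e_{i_ℓ,j_ℓ},k_ℓ)` is `0`-simple if `k₁ = m_{i₁}`,
`k_a ≠ 0` for `a ≠ ℓ` and `k_ℓ = 0`. -/
def ZeroSimple (n r : ℕ) (m : Fin n → ℕ) (p : List (Edge n r)) : Prop :=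
  ∃ h : p ≠ [], IsQPath n r m p ∧
    (p.head h).2 = (m (p.head h).1.1.1 : ZMod r) ∧
    (∀ e ∈ p.dropLast, e.2 ≠ (0 : ZMod r)) ∧
    (p.getLast h).2 = 0

/-- A `0`-simple path is `k`-step if there are indices `t₁ < ⋯ < t_{k+1}` starting at
the source index and ending at the final range index, such that every edge of the path
has its range among the columns `t_q`, and every interior column `t_q` (`2 ≤ q ≤ k`) is
actually visited. -/
def KStep (n r : ℕ) (k : ℕ) (p : List (Edge n r)) : Prop :=
  ∃ (h : p ≠ []) (t : Fin (k + 1) → Fin n), StrictMono t ∧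
    t 0 = (p.head h).1.1.1 ∧ t (Fin.last k) = (p.getLast h).1.1.2 ∧
    (∀ e ∈ p, ∃ q : Fin (k + 1), (e : Edge n r).1.1.2 = t q) ∧
    ∀ q : Fin (k + 1), 0 < (q : ℕ) → (q : ℕ) < k → ∃ e ∈ p, (e : Edge n r).1.1.2 = t q

end QL

namespace QL

variable {n r : ℕ}

/-- `p` is a nonempty path from `(v, k)` to `(j, 0)` whose level is nonzero at every
intermediate vertex. -/
def FirstReturn (m : Fin n → ℕ) (j : Fin n) : Fin n → ZMod r → List (Edge n r) → Prop
  | _, _, [] => False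
  | v, k, e :: p => esrc n r m e = (v, k) ∧
      ((e.2 = 0 ∧ p = [] ∧ e.1.1.2 = j) ∨ (e.2 ≠ 0 ∧ FirstReturn m j e.1.1.2 e.2 p))

theorem isQPath_iff_isChain (m : Fin n → ℕ) (p : List (Edge n r)) :
    IsQPath n r m p ↔ p.IsChain fun e f => ern n r e = esrc n r m f :=
  Iff.rfl

theorem firstReturn_iff (m : Fin n → ℕ) (j v : Fin n) (k : ZMod r) (p : List (Edge n r)) :
    FirstReturn m j v k p ↔ ∃ h : p ≠ [], IsQPath n r m p ∧ esrc n r m (p.head h) = (v, k) ∧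
      (∀ e ∈ p.dropLast, e.2 ≠ (0 : ZMod r)) ∧ ern n r (p.getLast h) = (j, 0) := by
  induction p generalizing v k with
  | nil => simp [FirstReturn]
  | cons e p ih =>
    rcases p with _ | ⟨f, p⟩
    · simp [FirstReturn, isQPath_iff_isChain, ern, and_comm]
    · simp only [FirstReturn] at ih ⊢
      rw [ih]
      simp [isQPath_iff_isChain, ern]
      grind

theorem firstReturn_zero_iff_zeroSimple (m : Fin n → ℕ) (i j : Fin n) (p : List (Edge n r)) :
    FirstReturn m j i 0 p ↔ ∃ h : p ≠ [], ZeroSimple n r m p ∧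
      esrc n r m (p.head h) = (i, 0) ∧ ern n r (p.getLast h) = (j, 0) := by
  rw [firstReturn_iff]
  constructor
  · rintro ⟨h, hp, hs, hd, hl⟩
    refine ⟨h, ⟨h, hp, ?_, hd, congrArg Prod.snd hl⟩, hs, hl⟩
    exact sub_eq_zero.1 (congrArg Prod.snd hs)
  · rintro ⟨h, ⟨_, hp, _, hd, _⟩, hs, hl⟩
    exact ⟨h, hp, hs, hd, hl⟩

theorem FirstReturn.range_mem_Icc {m : Fin n → ℕ} {j v : Fin n} {k : ZMod r}
    {p : List (Edge n r)} (hp : FirstReturn m j v k p) :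
    v ≤ j ∧ ∀ e ∈ p, v ≤ e.1.1.2 ∧ e.1.1.2 ≤ j := by
  induction p generalizing v k with
  | nil => exact hp.elim
  | cons e p ih =>
    obtain ⟨hs, h⟩ := hp
    have hv : e.1.1.1 = v := congrArg Prod.fst hs
    have he : v ≤ e.1.1.2 := hv ▸ e.1.2
    rcases h with ⟨_, rfl, rfl⟩ | ⟨_, h⟩
    · simp [he]
    · obtain ⟨h1, h2⟩ := ih h
      refine ⟨he.trans h1, ?_⟩
      simp only [List.mem_cons, forall_eq_or_imp]
      exact ⟨⟨he, h1⟩, fun f hf => ⟨he.trans (h2 f hf).1, (h2 f hf).2⟩⟩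

theorem FirstReturn.ne_nil {m : Fin n → ℕ} {j v : Fin n} {k : ZMod r}
    {p : List (Edge n r)} (hp : FirstReturn m j v k p) : p ≠ [] := by
  rintro rfl
  exact hp

/-- The first-return paths from `(v, k)` to `(j, 0)` all of whose ranges lie in the columns
of `S`. -/
def returnPaths (m : Fin n → ℕ) (S : Finset (Fin n)) (j v : Fin n) (k : ZMod r) :
    Set (List (Edge n r)) :=
  {p | FirstReturn m j v k p ∧ ∀ e ∈ p, e.1.1.2 ∈ S}

theorem encard_biUnion_finset {ι α : Type*} (s : Finset ι) (f : ι → Set α)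
    (hf : (s : Set ι).PairwiseDisjoint f) :
    (⋃ x ∈ s, f x).encard = ∑ x ∈ s, (f x).encard := by
  rw [← finsum_mem_coe_finset, ← s.finite_toSet.encard_biUnion hf]
  simp only [SetLike.mem_coe]

section Recursion

variable {m : Fin n → ℕ} {S : Finset (Fin n)} {j v : Fin n} {k : ZMod r}

theorem encard_returnPaths_of_add_eq_zero (hv : v ≤ j) (hj : j ∈ S)
    (hk : k + m v = 0) : (returnPaths m S j v k).encard = 1 := by
  rw [Set.encard_eq_one]
  refine ⟨[(⟨(v, j), hv⟩, 0)], Set.eq_singleton_iff_unique_mem.2 ⟨?_, ?_⟩⟩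
  · refine ⟨⟨?_, Or.inl ⟨rfl, rfl, rfl⟩⟩, by simpa using hj⟩
    simp only [esrc, Prod.mk.injEq, true_and]
    linear_combination -hk
  · rintro (_ | ⟨⟨⟨⟨a, b⟩, hab⟩, c⟩, p⟩) ⟨hp, -⟩
    · exact hp.elim
    · obtain ⟨hs, h⟩ := hp
      simp only [esrc, Prod.mk.injEq] at hs
      obtain ⟨rfl, hs⟩ := hs
      have hc : c = 0 := by linear_combination hs + hk
      rcases h with ⟨_, rfl, h⟩ | ⟨h, _⟩
      · obtain rfl : b = j := h
        rw [hc]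
      · exact absurd hc h

theorem encard_returnPaths_of_add_ne_zero (hk : k + m v ≠ 0) :
    (returnPaths m S j v k).encard =
      ∑ w ∈ S with v ≤ w, (returnPaths m S j w (k + (m v : ZMod r))).encard := by
  classical
  let f : Fin n → Set (List (Edge n r)) := fun w =>
    if h : v ≤ w then List.cons (⟨(v, w), h⟩, k + (m v : ZMod r)) ''
      returnPaths m S j w (k + m v) else ∅
  have hU : returnPaths m S j v k = ⋃ w ∈ S.filter (v ≤ ·), f w := by
    ext p
    simp only [Set.mem_iUnion, Finset.mem_filter, exists_prop, f]
    constructor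
    · rcases p with _ | ⟨⟨⟨⟨a, b⟩, hab⟩, c⟩, p⟩
      · exact fun h => h.1.elim
      rintro ⟨⟨hs, h⟩, hS⟩
      simp only [esrc, Prod.mk.injEq] at hs
      obtain ⟨rfl, hs⟩ := hs
      obtain rfl : c = k + m a := by linear_combination hs
      rcases h with ⟨h, _⟩ | ⟨_, h⟩
      · exact absurd h hk
      · refine ⟨b, ⟨hS _ List.mem_cons_self, hab⟩, ?_⟩
        rw [dif_pos hab]
        exact ⟨p, ⟨h, fun e he => hS e (by simp [he])⟩, rfl⟩
    · rintro ⟨w, ⟨hw, hvw⟩, h⟩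
      rw [dif_pos hvw] at h
      obtain ⟨p, ⟨hp, hS⟩, rfl⟩ := h
      refine ⟨⟨by simp [esrc], Or.inr ⟨hk, hp⟩⟩, ?_⟩
      simp only [List.mem_cons, forall_eq_or_imp]
      exact ⟨hw, hS⟩
  rw [hU, encard_biUnion_finset]
  · refine Finset.sum_congr rfl fun w hw => ?_
    simp only [f, dif_pos (Finset.mem_filter.1 hw).2]
    exact (List.cons_injective).encard_image _
  · intro w hw w' hw' hne
    rw [Function.onFun, Set.disjoint_left]
    simp only [Finset.coe_filter, Set.mem_ofPred_eq] at hw hw'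
    simp only [f, dif_pos hw.2, dif_pos hw'.2]
    rintro _ ⟨p, _, rfl⟩ ⟨q, _, h⟩
    simp only [List.cons.injEq, Prod.mk.injEq, Subtype.mk.injEq, true_and, and_true] at h
    exact hne h.1.symm

end Recursion

section Levels

theorem neg_succ_mul_ne_zero {u b : ℕ} (hu : Nat.gcd u r = 1) (hb : b + 1 < r) :
    -((b + 1 : ℕ) : ZMod r) * u ≠ 0 := by
  rw [neg_mul, neg_ne_zero, ← Nat.cast_mul, Ne, ZMod.natCast_eq_zero_iff]
  intro h
  have := (Nat.Coprime.symm hu : Nat.Coprime r u).dvd_of_dvd_mul_right h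
  exact absurd (Nat.le_of_dvd b.succ_pos this) (by omega)

theorem neg_succ_mul_add (u b : ℕ) :
    -((b + 1 + 1 : ℕ) : ZMod r) * u + u = -((b + 1 : ℕ) : ZMod r) * u := by
  push_cast
  ring

theorem exists_eq_neg_succ_mul [NeZero r] {u : ℕ} (hu : Nat.gcd u r = 1) (k : ZMod r) :
    ∃ b, b + 1 ≤ r ∧ k = -((b + 1 : ℕ) : ZMod r) * u := by
  let x : ZMod r := -k * (u : ZMod r)⁻¹ - 1
  refine ⟨x.val, x.val_lt, ?_⟩
  have hux : (u : ZMod r) * (u : ZMod r)⁻¹ = 1 := ZMod.coe_mul_inv_eq_one u hu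
  push_cast
  rw [ZMod.natCast_zmod_val]
  simp only [x]
  linear_combination (-k) * hux

theorem sum_range_neg_succ_mul [NeZero r] {u : ℕ} (hu : Nat.gcd u r = 1) (f : ZMod r → ℕ∞) :
    ∑ x ∈ Finset.range (r - 1), f (-((x + 1 : ℕ) : ZMod r) * u) =
      ∑ k ∈ Finset.univ.erase (0 : ZMod r), f k := by
  refine Finset.sum_nbij (fun x => -((x + 1 : ℕ) : ZMod r) * u) ?_ ?_ ?_ fun _ _ => rfl
  · intro x hx
    rw [Finset.mem_range] at hx
    simpa using neg_succ_mul_ne_zero hu (by omega : x + 1 < r)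
  · intro x hx y hy hxy
    simp only [Finset.coe_range, Set.mem_Iio] at hx hy
    have hux : (u : ZMod r) * (u : ZMod r)⁻¹ = 1 := ZMod.coe_mul_inv_eq_one u hu
    have h : ((x + 1 : ℕ) : ZMod r) = ((y + 1 : ℕ) : ZMod r) := by
      simp only at hxy
      linear_combination (-(u : ZMod r)⁻¹) * hxy +
        (((y + 1 : ℕ) : ZMod r) - ((x + 1 : ℕ) : ZMod r)) * hux
    rw [ZMod.natCast_eq_natCast_iff'] at h
    rw [Nat.mod_eq_of_lt (by omega), Nat.mod_eq_of_lt (by omega)] at h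
    omega
  · intro k hk
    obtain ⟨b, hb, rfl⟩ := exists_eq_neg_succ_mul hu k
    refine ⟨b, ?_, rfl⟩
    have : b + 1 ≠ r := by
      intro h
      simp [h] at hk
    simp only [Finset.coe_range, Set.mem_Iio]
    omega

end Levels

section Columns

variable [NeZero r] {m : Fin n → ℕ} {S : Finset (Fin n)} {i l j : Fin n}

theorem encard_returnPaths_last_column (hm : ∀ i, Nat.gcd (m i) r = 1)
    (hS : S.filter (j ≤ ·) = {j}) (k : ZMod r) : (returnPaths m S j j k).encard = 1 := by
  have hj : j ∈ S := (Finset.mem_filter.1 (hS ▸ Finset.mem_singleton_self j)).1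
  obtain ⟨b, hb, rfl⟩ := exists_eq_neg_succ_mul (hm j) k
  induction b with
  | zero => exact encard_returnPaths_of_add_eq_zero le_rfl hj (by simp)
  | succ b ih =>
    rw [encard_returnPaths_of_add_ne_zero, hS, Finset.sum_singleton, neg_succ_mul_add,
      ih (by omega)]
    rw [neg_succ_mul_add]
    exact neg_succ_mul_ne_zero (hm j) (by omega)

theorem encard_returnPaths_penultimate_column (hm : ∀ i, Nat.gcd (m i) r = 1) (hlj : l < j)
    (hS : S.filter (l ≤ ·) = {l, j}) (hSj : S.filter (j ≤ ·) = {j}) (b : ℕ) (hb : b + 1 ≤ r) :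
    (returnPaths m S j l (-((b + 1 : ℕ) : ZMod r) * (m l : ZMod r))).encard = (b + 1 : ℕ) := by
  have hj : j ∈ S := (Finset.mem_filter.1 (hSj ▸ Finset.mem_singleton_self j)).1
  induction b with
  | zero => exact encard_returnPaths_of_add_eq_zero hlj.le hj (by simp)
  | succ b ih =>
    rw [encard_returnPaths_of_add_ne_zero, hS, Finset.sum_pair hlj.ne, neg_succ_mul_add,
      ih (by omega), encard_returnPaths_last_column hm hSj]
    · rfl
    · rw [neg_succ_mul_add]
      exact neg_succ_mul_ne_zero (hm l) (by omega)

theorem encard_returnPaths_antepenultimate_column (hm : ∀ i, Nat.gcd (m i) r = 1)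
    (hil : i < l) (hlj : l < j) (hS : S.filter (i ≤ ·) = {i, l, j})
    (hSj : S.filter (j ≤ ·) = {j}) (b : ℕ) (hb : b + 1 ≤ r) :
    (returnPaths m S j i (-((b + 1 : ℕ) : ZMod r) * (m i : ZMod r))).encard = (b + 1 : ℕ) +
      ∑ x ∈ Finset.range b,
        (returnPaths m S j l (-((x + 1 : ℕ) : ZMod r) * (m i : ZMod r))).encard := by
  have hj : j ∈ S := (Finset.mem_filter.1 (hSj ▸ Finset.mem_singleton_self j)).1
  induction b with
  | zero =>
    rw [encard_returnPaths_of_add_eq_zero (hil.trans hlj).le hj (by simp)]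
    simp
  | succ b ih =>
    rw [encard_returnPaths_of_add_ne_zero, hS, Finset.sum_insert, Finset.sum_pair hlj.ne,
      neg_succ_mul_add, ih (by omega), encard_returnPaths_last_column hm hSj,
      Finset.sum_range_succ]
    · push_cast
      ring
    · simp [hil.ne, (hil.trans hlj).ne]
    · rw [neg_succ_mul_add]
      exact neg_succ_mul_ne_zero (hm i) (by omega)

theorem encard_returnPaths_pair (hm : ∀ i, Nat.gcd (m i) r = 1) (hij : i < j) :
    (returnPaths m {i, j} j i (0 : ZMod r)).encard = r := by
  have hr : r - 1 + 1 = r := Nat.succ_pred_eq_of_ne_zero (NeZero.ne r)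
  have h := encard_returnPaths_penultimate_column (S := {i, j}) hm hij
    (by ext x; grind) (by ext x; grind) (r - 1) hr.le
  rw [hr] at h
  simpa using h

theorem encard_returnPaths_triple (hm : ∀ i, Nat.gcd (m i) r = 1) (hil : i < l) (hlj : l < j) :
    (returnPaths m {i, l, j} j i (0 : ZMod r)).encard =
      (r + ∑ x ∈ Finset.range (r - 1), (x + 1) : ℕ) := by
  have hr : r - 1 + 1 = r := Nat.succ_pred_eq_of_ne_zero (NeZero.ne r)
  have hS : ({i, l, j} : Finset (Fin n)).filter (i ≤ ·) = {i, l, j} := by ext x; grind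
  have hSl : ({i, l, j} : Finset (Fin n)).filter (l ≤ ·) = {l, j} := by ext x; grind
  have hSj : ({i, l, j} : Finset (Fin n)).filter (j ≤ ·) = {j} := by ext x; grind
  have h := encard_returnPaths_antepenultimate_column hm hil hlj hS hSj (r - 1) hr.le
  rw [hr, sum_range_neg_succ_mul (hm i) fun k => (returnPaths m {i, l, j} j l k).encard,
    ← sum_range_neg_succ_mul (hm l)] at h
  rw [Finset.sum_congr rfl fun x hx => encard_returnPaths_penultimate_column hm hlj hSl hSj x
    (by have := Finset.mem_range.1 hx; omega)] at h
  simpa using h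

end Columns

section Steps

variable {m : Fin n → ℕ} {i j : Fin n} {p : List (Edge n r)}

theorem FirstReturn.head_getLast {k : ZMod r} (hp : FirstReturn m j i k p) (h : p ≠ []) :
    (p.head h).1.1.1 = i ∧ (p.getLast h).1.1.2 = j := by
  obtain ⟨_, _, hs, _, hl⟩ := (firstReturn_iff m j i k p).1 hp
  exact ⟨congrArg Prod.fst hs, congrArg Prod.fst hl⟩

theorem FirstReturn.kStep_one_iff {k : ZMod r} (hp : FirstReturn m j i k p) (hij : i < j) :
    KStep n r 1 p ↔ ∀ e ∈ p, e.1.1.2 ∈ ({i, j} : Finset (Fin n)) := by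
  obtain ⟨hh, hl⟩ := hp.head_getLast hp.ne_nil
  constructor
  · rintro ⟨h, t, -, h0, h1, ht, -⟩ e he
    obtain ⟨q, hq⟩ := ht e he
    rw [hh] at h0
    rw [hl] at h1
    fin_cases q
    · simp [hq, ← h0]
    · simp [hq, ← h1]
  · intro hS
    refine ⟨hp.ne_nil, ![i, j], ?_, hh.symm, hl.symm, ?_, fun q h0 h1 => by omega⟩
    · rw [Fin.strictMono_iff_lt_succ]
      intro q
      fin_cases q
      exact hij
    · intro e he
      have := hS e he
      simp only [Finset.mem_insert, Finset.mem_singleton] at this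
      rcases this with h | h
      · exact ⟨0, h⟩
      · exact ⟨1, h⟩

theorem FirstReturn.kStep_two_iff {k : ZMod r} (hp : FirstReturn m j i k p) :
    KStep n r 2 p ↔ ∃ l ∈ Finset.Ioo i j,
      (∀ e ∈ p, e.1.1.2 ∈ ({i, l, j} : Finset (Fin n))) ∧ ∃ e ∈ p, e.1.1.2 = l := by
  obtain ⟨hh, hl⟩ := hp.head_getLast hp.ne_nil
  constructor
  · rintro ⟨h, t, hmono, h0, h1, ht, hv⟩
    rw [hh] at h0
    rw [hl] at h1
    refine ⟨t 1, Finset.mem_Ioo.2 ⟨?_, ?_⟩, fun e he => ?_, hv 1 (by simp) (by simp)⟩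
    · rw [← h0]
      exact hmono (by decide)
    · rw [← h1]
      exact hmono (by decide)
    · obtain ⟨q, hq⟩ := ht e he
      fin_cases q
      · simp [hq, ← h0]
      · simp [hq]
      · simp [hq, ← h1]
  · rintro ⟨l, hl', hS, hv⟩
    obtain ⟨hil, hlj⟩ := Finset.mem_Ioo.1 hl'
    refine ⟨hp.ne_nil, ![i, l, j], ?_, hh.symm, hl.symm, ?_, fun q h0 h1 => ?_⟩
    · rw [Fin.strictMono_iff_lt_succ]
      intro q
      fin_cases q
      · exact hil
      · exact hlj
    · intro e he
      have := hS e he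
      simp only [Finset.mem_insert, Finset.mem_singleton] at this
      rcases this with h | h | h
      · exact ⟨0, h⟩
      · exact ⟨1, h⟩
      · exact ⟨2, h⟩
    · obtain rfl : q = 1 := Fin.ext (show (q : ℕ) = 1 by omega)
      exact hv

theorem setOf_kStep_one (hij : i < j) :
    {p : List (Edge n r) | ∃ h : p ≠ [], ZeroSimple n r m p ∧
      KStep n r 1 p ∧ esrc n r m (p.head h) = (i, 0) ∧ ern n r (p.getLast h) = (j, 0)} =
      returnPaths m {i, j} j i 0 := by
  ext p
  have := firstReturn_zero_iff_zeroSimple m i j p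
  have := fun hp : FirstReturn m j i 0 p => hp.kStep_one_iff hij
  simp only [Set.mem_ofPred_eq, returnPaths]
  grind

theorem setOf_kStep_two :
    {p : List (Edge n r) | ∃ h : p ≠ [], ZeroSimple n r m p ∧
      KStep n r 2 p ∧ esrc n r m (p.head h) = (i, 0) ∧ ern n r (p.getLast h) = (j, 0)} =
      ⋃ l ∈ Finset.Ioo i j, returnPaths m {i, l, j} j i 0 \ returnPaths m {i, j} j i 0 := by
  ext p
  have h1 := firstReturn_zero_iff_zeroSimple m i j p
  have h2 := fun hp : FirstReturn m j i 0 p => hp.kStep_two_iff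
  simp only [Set.mem_ofPred_eq, returnPaths, Set.mem_iUnion, Set.mem_sdiff, exists_prop]
  constructor
  · rintro ⟨h, hz, hk, he⟩
    have hp := h1.2 ⟨h, hz, he⟩
    obtain ⟨l, hl, hS, e, hep, hel⟩ := (h2 hp).1 hk
    refine ⟨l, hl, ⟨hp, hS⟩, fun hc => ?_⟩
    have := hc.2 e hep
    have := Finset.mem_Ioo.1 hl
    grind
  · rintro ⟨l, hl, ⟨hp, hS⟩, hc⟩
    obtain ⟨h, hz, he⟩ := h1.1 hp
    refine ⟨h, hz, (h2 hp).2 ⟨l, hl, hS, ?_⟩, he⟩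
    grind

theorem setOf_zeroSimple {l : Fin n} (hil : (i : ℕ) + 1 = l) (hlj : (l : ℕ) + 1 = j) :
    {p : List (Edge n r) | ∃ h : p ≠ [], ZeroSimple n r m p ∧
      esrc n r m (p.head h) = (i, 0) ∧ ern n r (p.getLast h) = (j, 0)} =
      returnPaths m {i, l, j} j i 0 := by
  ext p
  simp only [Set.mem_ofPred_eq, returnPaths, ← firstReturn_zero_iff_zeroSimple]
  refine ⟨fun hp => ⟨hp, fun e he => ?_⟩, And.left⟩
  have := hp.range_mem_Icc.2 e he
  simp only [Finset.mem_insert, Finset.mem_singleton, Fin.ext_iff]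
  simp only [Fin.le_def] at this
  omega

theorem pairwiseDisjoint_returnPaths_diff :
    ((Finset.Ioo i j : Finset (Fin n)) : Set (Fin n)).PairwiseDisjoint fun l =>
      returnPaths m {i, l, j} j i (0 : ZMod r) \ returnPaths m {i, j} j i 0 := by
  intro l hl l' hl' hne
  rw [Function.onFun, Set.disjoint_left]
  rintro p ⟨hp, hp'⟩ ⟨hq, -⟩
  refine hp' ⟨hp.1, fun e he => ?_⟩
  have := hp.2 e he
  have := hq.2 e he
  grind

end Steps

section Counts

variable [NeZero r] {m : Fin n → ℕ} {i l j : Fin n}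

theorem two_mul_add_sum_range_succ :
    2 * (r + ∑ x ∈ Finset.range (r - 1), (x + 1)) = r * (r + 1) := by
  obtain ⟨s, rfl⟩ := Nat.exists_eq_succ_of_ne_zero (NeZero.ne r)
  have h := Finset.sum_range_id_mul_two (s + 1)
  rw [Finset.sum_range_succ'] at h
  simp only [Nat.succ_eq_add_one, Nat.add_sub_cancel] at h ⊢
  linarith

theorem encard_returnPaths_triple_diff_pair (hm : ∀ i, Nat.gcd (m i) r = 1)
    (hil : i < l) (hlj : l < j) :
    (returnPaths m {i, l, j} j i (0 : ZMod r) \ returnPaths m {i, j} j i 0).encard =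
      (∑ x ∈ Finset.range (r - 1), (x + 1) : ℕ) := by
  have hsub : returnPaths m {i, j} j i (0 : ZMod r) ⊆ returnPaths m {i, l, j} j i 0 :=
    fun p hp => ⟨hp.1, fun e he => by have := hp.2 e he; grind⟩
  have h := Set.encard_sdiff_add_encard_of_subset hsub
  rw [encard_returnPaths_pair hm (hil.trans hlj), encard_returnPaths_triple hm hil hlj,
    Nat.cast_add, add_comm] at h
  exact (ENat.add_right_injective_of_ne_top (ENat.natCast_ne_top r)) h

end Counts

end QL

open QL in
/-- Lemma `l:PathsQuantum` (i), (ii): in `L_{2n−1} ×_m ℤ_r`, for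
`i + 1 ≤ j` there are exactly `r` one-step `0`-simple paths from `(v_i,0)` to `(v_j,0)`;
for `i + 2 ≤ j` there are exactly `r(r−1)/2 · (j−i−1)` two-step `0`-simple paths from
`(v_i,0)` to `(v_j,0)`; consequently there are `r(r+1)/2` `0`-simple paths from
`(v_i,0)` to `(v_{i+2},0)`. -/
theorem stmt18 (n r : ℕ) (hr : 2 ≤ r) (m : Fin n → ℕ) (hm : ∀ i, 0 < m i)
    (hgcd : ∀ i, Nat.gcd (m i) r = 1) :
    (∀ i j : Fin n, (i : ℕ) + 1 ≤ (j : ℕ) →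
      Nat.card {p : List (Edge n r) // ∃ h : p ≠ [], ZeroSimple n r m p ∧
        KStep n r 1 p ∧ esrc n r m (p.head h) = (i, 0) ∧ ern n r (p.getLast h) = (j, 0)}
        = r) ∧
    (∀ i j : Fin n, (i : ℕ) + 2 ≤ (j : ℕ) →
      2 * Nat.card {p : List (Edge n r) // ∃ h : p ≠ [], ZeroSimple n r m p ∧
        KStep n r 2 p ∧ esrc n r m (p.head h) = (i, 0) ∧ ern n r (p.getLast h) = (j, 0)}
        = r * (r - 1) * ((j : ℕ) - (i : ℕ) - 1)) ∧
    (∀ i j : Fin n, (i : ℕ) + 2 = (j : ℕ) →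
      2 * Nat.card {p : List (Edge n r) // ∃ h : p ≠ [], ZeroSimple n r m p ∧
        esrc n r m (p.head h) = (i, 0) ∧ ern n r (p.getLast h) = (j, 0)}
        = r * (r + 1)) := by
  have : NeZero r := ⟨by omega⟩
  refine ⟨fun i j hij => ?_, fun i j hij => ?_, fun i j hij => ?_⟩
  · have hij' : i < j := Fin.lt_def.2 hij
    rw [← Set.coe_ofPred, Nat.card_coe_set_eq, setOf_kStep_one hij', Set.ncard,
      encard_returnPaths_pair hgcd hij', ENat.toNat_natCast]
  · rw [← Set.coe_ofPred, Nat.card_coe_set_eq, setOf_kStep_two, Set.ncard,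
      encard_biUnion_finset _ _ pairwiseDisjoint_returnPaths_diff,
      Finset.sum_congr rfl fun l hl => encard_returnPaths_triple_diff_pair hgcd
        (Finset.mem_Ioo.1 hl).1 (Finset.mem_Ioo.1 hl).2,
      Finset.sum_const, Fin.card_Ioo, nsmul_eq_mul, ← Nat.cast_mul, ENat.toNat_natCast]
    have h : 2 * ∑ x ∈ Finset.range (r - 1), (x + 1) = r * (r - 1) := by
      have h := two_mul_add_sum_range_succ (r := r)
      obtain ⟨s, rfl⟩ : ∃ s, r = s + 1 := ⟨r - 1, by omega⟩
      simp only [Nat.add_sub_cancel] at h ⊢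
      linarith
    rw [← h]
    ring
  · have hj := j.isLt
    let l : Fin n := ⟨i + 1, by omega⟩
    rw [← Set.coe_ofPred, Nat.card_coe_set_eq, setOf_zeroSimple (l := l) rfl hij, Set.ncard,
      encard_returnPaths_triple hgcd (Fin.lt_def.2 (Nat.lt_succ_self _))
        (Fin.lt_def.2 (by simp only [l]; omega)), ENat.toNat_natCast, two_mul_add_sum_range_succ]
end

section
/- Let r ∈ ℕ with r ≥ 2, n ∈ ℕ, and m = (m₁, …, m_n) ∈ ℕⁿ with gcd(m_i, r) = 1 for all i, and for each i let m_i⁻¹ denote an integer representing the multiplicative inverse of m_i modulo r. In the graph L_{2n−1} ×_m ℤ_r, for each i with i + 3 ≤ n, the number of 3-step 0-simple paths from (v_i, 0) to (v_{i+3}, 0) is congruent to −m_{i+2}⁻¹ m_{i+1} · (r(r−1)(r−2)/3) modulo r; consequently the total number of 0-simple paths from (v_i, 0) to (v_{i+3}, 0) is congruent to −m_{i+2}⁻¹ m_{i+1} · (r(r−1)(r−2)/3) modulo r. -/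
namespace QL

variable {n r : ℕ} {m : Fin n → ℕ} {R : Fin n → Fin n → Prop} {T : Fin n}

/-- The paths from `v` to `(T, 0)` which do not meet `ZMod r`-coordinate `0` strictly in between
and whose column transitions all satisfy `R`. -/
def pathsFrom (m : Fin n → ℕ) (R : Fin n → Fin n → Prop) (T : Fin n) (v : Fin n × ZMod r) :
    Set (List (Edge n r)) :=
  {p | ∃ h : p ≠ [], IsQPath n r m p ∧ esrc n r m (p.head h) = v ∧
    ern n r (p.getLast h) = (T, 0) ∧ (∀ e ∈ p.dropLast, e.2 ≠ 0) ∧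
    ∀ e ∈ p, R e.1.1.1 e.1.1.2}

theorem isQPath_iff {p : List (Edge n r)} :
    IsQPath n r m p ↔ p.IsChain fun e f => ern n r e = esrc n r m f := Iff.rfl

theorem nil_notMem_pathsFrom (v : Fin n × ZMod r) : [] ∉ pathsFrom m R T v :=
  fun h => h.1 rfl

theorem cons_mem_pathsFrom {v : Fin n × ZMod r} {e : Edge n r} {p : List (Edge n r)} :
    e :: p ∈ pathsFrom m R T v ↔ esrc n r m e = v ∧ R e.1.1.1 e.1.1.2 ∧
      ((p = [] ∧ ern n r e = (T, 0)) ∨ (e.2 ≠ 0 ∧ p ∈ pathsFrom m R T (ern n r e))) := by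
  cases p with
  | nil =>
    simp only [pathsFrom, isQPath_iff, Set.mem_ofPred_eq, List.isChain_singleton,
      List.dropLast_singleton, List.forall_mem_singleton, List.head_cons, ne_eq, reduceCtorEq,
      not_false_eq_true, exists_true_left, List.getLast_singleton, true_and, List.not_mem_nil,
      IsEmpty.forall_iff, implies_true]
    tauto
  | cons f q =>
    simp only [pathsFrom, isQPath_iff, Set.mem_ofPred_eq, List.isChain_cons_cons,
      List.dropLast_cons_cons, List.forall_mem_cons, List.head_cons, ne_eq, reduceCtorEq,
      not_false_eq_true, exists_true_left, List.getLast_cons_cons, false_and, false_or]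
    tauto

theorem encard_pathsFrom_of_add_eq_zero [DecidableRel R] {j : Fin n} {k : ZMod r}
    (hk : k + m j = 0) (hj : j ≤ T) :
    (pathsFrom m R T (j, k)).encard = if R j T then 1 else 0 := by
  split_ifs with h
  · rw [Set.encard_eq_one]
    refine ⟨[(⟨(j, T), hj⟩, 0)], Set.ext fun p => ?_⟩
    cases p with
    | nil => simp [nil_notMem_pathsFrom]
    | cons e p =>
      obtain ⟨⟨⟨a, b⟩, hab⟩, x⟩ := e
      simp only [cons_mem_pathsFrom, esrc, ern, Prod.mk.injEq, Set.mem_singleton_iff,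
        List.cons.injEq, Subtype.mk.injEq]
      constructor
      · rintro ⟨⟨rfl, hx⟩, -, ⟨rfl, rfl, rfl⟩ | ⟨hx', -⟩⟩
        · simp
        · exact absurd (by rw [← hk, ← hx]; ring) hx'
      · rintro ⟨⟨⟨rfl, rfl⟩, rfl⟩, rfl⟩
        exact ⟨⟨rfl, by linear_combination -hk⟩, h, Or.inl ⟨rfl, rfl, rfl⟩⟩
  · rw [Set.encard_eq_zero, Set.eq_empty_iff_forall_notMem]
    intro p
    cases p with
    | nil => exact nil_notMem_pathsFrom _
    | cons e p =>
      obtain ⟨⟨⟨a, b⟩, hab⟩, x⟩ := e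
      simp only [cons_mem_pathsFrom, esrc, ern, Prod.mk.injEq]
      rintro ⟨⟨rfl, hx⟩, hR, ⟨rfl, rfl, rfl⟩ | ⟨hx', -⟩⟩
      · exact h hR
      · exact absurd (by rw [← hk, ← hx]; ring) hx'

theorem encard_pathsFrom_of_add_ne_zero [DecidableRel R] {j : Fin n} {k : ZMod r}
    (hk : k + m j ≠ 0) :
    (pathsFrom m R T (j, k)).encard =
      ∑ j' with j ≤ j' ∧ R j j', (pathsFrom m R T (j', k + (m j : ZMod r))).encard := by
  let s : Fin n → Set (List (Edge n r)) := fun j' =>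
    {p | ∃ h : j ≤ j', R j j' ∧ ∃ q ∈ pathsFrom m R T (j', k + (m j : ZMod r)),
      p = (⟨(j, j'), h⟩, k + (m j : ZMod r)) :: q}
  have hs : pathsFrom m R T (j, k) = ⋃ j', s j' := by
    ext p
    rw [Set.mem_iUnion]
    cases p with
    | nil => simp [nil_notMem_pathsFrom, s]
    | cons e p =>
      obtain ⟨⟨⟨a, b⟩, hab⟩, x⟩ := e
      simp only [cons_mem_pathsFrom, esrc, ern, Prod.mk.injEq, s, Set.mem_ofPred_eq,
        List.cons.injEq, Subtype.mk.injEq]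
      constructor
      · rintro ⟨⟨rfl, hx⟩, hR, h⟩
        obtain rfl : x = k + m a := by rw [← hx]; ring
        rcases h with ⟨-, -, h⟩ | ⟨-, h⟩
        · exact absurd h hk
        · exact ⟨b, hab, hR, p, h, by simp⟩
      · rintro ⟨j', hj, hR, q, hq, ⟨⟨rfl, rfl⟩, rfl⟩, rfl⟩
        exact ⟨⟨rfl, by ring⟩, hR, Or.inr ⟨hk, hq⟩⟩
  have hd : Pairwise (Function.onFun Disjoint s) := by
    intro a b hab
    rw [Function.onFun, Set.disjoint_left]
    rintro p ⟨_, _, q, _, rfl⟩ ⟨_, _, q', _, h⟩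
    simp only [List.cons.injEq, Prod.mk.injEq, Subtype.mk.injEq] at h
    exact hab h.1.1.2
  rw [hs, Set.encard_iUnion_of_finite hd, finsum_eq_sum_of_fintype, Finset.sum_filter]
  refine Finset.sum_congr rfl fun j' _ => ?_
  split_ifs with h
  · refine Eq.trans ?_ ((List.cons_injective
      (a := ((⟨(j, j'), h.1⟩, k + (m j : ZMod r)) : Edge n r))).encard_image _)
    congr 1
    ext p
    constructor
    · rintro ⟨_, _, q, hq, rfl⟩
      exact ⟨q, hq, rfl⟩
    · rintro ⟨q, hq, rfl⟩
      exact ⟨h.1, h.2, q, hq, rfl⟩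
  · rw [Set.encard_eq_zero, Set.eq_empty_iff_forall_notMem]
    rintro p ⟨h1, h2, -⟩
    exact h ⟨h1, h2⟩

/-- Columns weakly increase along a path. -/
theorem columns_le_of_mem_pathsFrom {p : List (Edge n r)} {v : Fin n × ZMod r}
    (hp : p ∈ pathsFrom m R T v) : v.1 ≤ T ∧ ∀ e ∈ p, v.1 ≤ e.1.1.2 ∧ e.1.1.2 ≤ T := by
  induction p generalizing v with
  | nil => exact absurd hp (nil_notMem_pathsFrom _)
  | cons e p ih =>
    obtain ⟨rfl, -, h⟩ := cons_mem_pathsFrom.1 hp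
    have he : (esrc n r m e).1 ≤ e.1.1.2 := e.1.2
    rcases h with ⟨rfl, h⟩ | ⟨-, h⟩
    · have hT : e.1.1.2 = T := congrArg Prod.fst h
      simpa [hT] using hT ▸ he
    · obtain ⟨h1, h2⟩ := ih h
      change e.1.1.2 ≤ T at h1
      refine ⟨he.trans h1, List.forall_mem_cons.2 ⟨⟨he, h1⟩, fun f hf => ?_⟩⟩
      exact ⟨he.trans (h2 f hf).1, (h2 f hf).2⟩

theorem pathsFrom_eq_empty {j : Fin n} (hj : T < j) (k : ZMod r) :
    pathsFrom m R T (j, k) = ∅ :=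
  Set.eq_empty_iff_forall_notMem.2 fun _ hp =>
    absurd (columns_le_of_mem_pathsFrom hp).1 (not_le.2 hj)

/-- All transitions of a path advance by at most one column iff every column between the first
and the last one is the range of some edge. -/
theorem forall_adjacent_iff_forall_visited {p : List (Edge n r)} {v : Fin n × ZMod r}
    (hp : p ∈ pathsFrom m R T v) :
    (∀ e ∈ p, (e.1.1.2 : ℕ) ≤ e.1.1.1 + 1) ↔
      ∀ c, v.1 < c → c ≤ T → ∃ e ∈ p, e.1.1.2 = c := by
  induction p generalizing v with
  | nil => exact absurd hp (nil_notMem_pathsFrom _)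
  | cons e p ih =>
    obtain ⟨rfl, -, h⟩ := cons_mem_pathsFrom.1 hp
    have he : e.1.1.1 ≤ e.1.1.2 := e.1.2
    simp only [List.forall_mem_cons, List.exists_mem_cons_iff]
    change _ ↔ ∀ c, e.1.1.1 < c → _
    rcases h with ⟨rfl, h⟩ | ⟨-, h⟩
    · obtain rfl : e.1.1.2 = T := congrArg Prod.fst h
      simp only [List.not_mem_nil, false_and, exists_false, or_false, IsEmpty.forall_iff,
        implies_true, and_true]
      constructor
      · intro h1 c hc hc'
        omega
      · intro h1
        by_contra! h2
        have := h1 ⟨e.1.1.1 + 1, by omega⟩ (by simp [Fin.lt_def]) (by simp [Fin.le_def]; omega)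
        have := congrArg Fin.val this
        simp at this
        omega
    · have hcol := (columns_le_of_mem_pathsFrom h).2
      rw [ih h]
      change (_ ∧ ∀ c, e.1.1.2 < c → _) ↔ _
      constructor
      · rintro ⟨h1, h2⟩ c hc hc'
        rcases lt_or_ge e.1.1.2 c with h3 | h3
        · exact Or.inr (h2 c h3 hc')
        · left; omega
      · intro h1
        refine ⟨?_, fun c hc hc' => (h1 c (he.trans_lt hc) hc').resolve_left hc.ne⟩
        by_contra! h2
        have hT := (columns_le_of_mem_pathsFrom h).1
        change e.1.1.2 ≤ T at hT
        rcases h1 ⟨e.1.1.1 + 1, by omega⟩ (by simp [Fin.lt_def])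
          (by simp [Fin.le_def]; omega) with h3 | ⟨f, hf, h3⟩
        · have := congrArg Fin.val h3
          simp at this
          omega
        · have := (hcol f hf).1
          change e.1.1.2 ≤ _ at this
          rw [h3, Fin.le_def] at this
          simp at this
          omega

theorem natCast_mul_natCast_ne_zero {a s : ℕ} (ha : a.gcd r = 1) (hs : 1 ≤ s) (hsr : s < r) :
    (a : ZMod r) * s ≠ 0 := by
  rw [← Nat.cast_mul, Ne, ZMod.natCast_eq_zero_iff]
  intro h
  have := Nat.le_of_dvd hs ((Nat.Coprime.symm ha).dvd_of_dvd_mul_left h)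
  omega

theorem exists_eq_neg_mul_natCast [NeZero r] {a : ℕ} (ha : a.gcd r = 1) (x : ZMod r) :
    ∃ s : ℕ, 1 ≤ s ∧ s ≤ r ∧ x = -((a : ZMod r) * s) := by
  have hu : (a : ZMod r) * (a : ZMod r)⁻¹ = 1 := ZMod.coe_mul_inv_eq_one a ha
  by_cases hx : x = 0
  · exact ⟨r, NeZero.one_le, le_rfl, by simp [hx]⟩
  · refine ⟨(-(a : ZMod r)⁻¹ * x).val, ?_, (ZMod.val_lt _).le, ?_⟩
    · rw [Nat.one_le_iff_ne_zero, Ne, ZMod.val_eq_zero]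
      intro h
      exact hx (by linear_combination -x * hu - a * h)
    · rw [ZMod.natCast_zmod_val]
      linear_combination -x * hu

theorem encard_pathsFrom_neg_mul [DecidableRel R] (hR : ∀ j, R j j) {j : Fin n} (hj : j ≤ T)
    (hmj : (m j).gcd r = 1) {s : ℕ} (hs : 1 ≤ s) (hsr : s ≤ r) :
    (pathsFrom m R T (j, -((m j : ZMod r) * (s : ZMod r)))).encard = (if R j T then 1 else 0) +
      ∑ t ∈ Finset.Ico 1 s, ∑ j' ∈ Finset.Ioc j T with R j j',
        (pathsFrom m R T (j', -((m j : ZMod r) * (t : ZMod r)))).encard := by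
  induction s, hs using Nat.le_induction with
  | base => simpa using encard_pathsFrom_of_add_eq_zero (by simp) hj
  | succ s hs ih =>
    have hk : -((m j : ZMod r) * (s + 1 : ℕ)) + m j = -((m j : ZMod r) * s) := by
      push_cast; ring
    rw [encard_pathsFrom_of_add_ne_zero, hk, Finset.sum_Ico_succ_top hs, ← add_assoc,
      ← ih (by omega)]
    · have hsub : insert j ({j' ∈ Finset.Ioc j T | R j j'}) ⊆
          ({j' | j ≤ j' ∧ R j j'} : Finset (Fin n)) := by
        intro a
        simp only [Finset.mem_insert, Finset.mem_filter, Finset.mem_Ioc, Finset.mem_univ, true_and]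
        rintro (rfl | h)
        · exact ⟨le_rfl, hR _⟩
        · exact ⟨h.1.1.le, h.2⟩
      rw [← Finset.sum_subset hsub, Finset.sum_insert (by simp)]
      intro a ha ha'
      simp only [Finset.mem_insert, Finset.mem_filter, Finset.mem_Ioc, Finset.mem_univ,
        true_and, not_or, not_and] at ha ha'
      rw [pathsFrom_eq_empty, Set.encard_empty]
      by_contra! h
      exact ha'.2 ⟨lt_of_le_of_ne ha.1 (Ne.symm ha'.1), h⟩ ha.2
    · rw [hk, neg_ne_zero]
      exact natCast_mul_natCast_ne_zero hmj hs (by omega)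

theorem finite_pathsFrom [NeZero r] (hR : ∀ j, R j j) (hm : ∀ j, (m j).gcd r = 1) (j : Fin n)
    (x : ZMod r) : (pathsFrom m R T (j, x)).Finite := by
  classical
  induction j using WellFoundedGT.induction generalizing x with
  | ind j ih =>
    rcases lt_or_ge T j with hj | hj
    · rw [pathsFrom_eq_empty hj]
      exact Set.finite_empty
    · obtain ⟨s, hs, hsr, rfl⟩ := exists_eq_neg_mul_natCast (hm j) x
      rw [← Set.encard_ne_top_iff, encard_pathsFrom_neg_mul hR hj (hm j) hs hsr,
        Ne, ENat.add_eq_top, not_or]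
      refine ⟨by split_ifs <;> simp, ENat.sum_ne_top.2 fun t _ => ENat.sum_ne_top.2 ?_⟩
      intro j' hj'
      rw [Finset.mem_filter, Finset.mem_Ioc] at hj'
      exact Set.encard_ne_top_iff.2 (ih j' hj'.1.1 _)

/-- The number of paths in `pathsFrom`, modulo `r`. -/
noncomputable def pathCount (m : Fin n → ℕ) (R : Fin n → Fin n → Prop) (T j : Fin n)
    (x : ZMod r) : ZMod r :=
  ((pathsFrom m R T (j, x)).ncard : ZMod r)

theorem pathCount_neg_mul [NeZero r] [DecidableRel R] (hR : ∀ j, R j j)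
    (hm : ∀ j, (m j).gcd r = 1) {j : Fin n} (hj : j ≤ T) {s : ℕ} (hs : 1 ≤ s) (hsr : s ≤ r) :
    pathCount m R T j (-((m j : ZMod r) * (s : ZMod r))) = (if R j T then 1 else 0) +
      ∑ j' ∈ Finset.Ioc j T with R j j', ∑ t ∈ Finset.Ico 1 s,
        pathCount m R T j' (-((m j : ZMod r) * (t : ZMod r))) := by
  have h := encard_pathsFrom_neg_mul hR hj (hm j) hs hsr
  simp only [← (finite_pathsFrom hR hm _ _).cast_ncard_eq] at h
  have h' : (pathsFrom m R T (j, -((m j : ZMod r) * (s : ZMod r)))).ncard = (if R j T then 1 else 0) +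
      ∑ t ∈ Finset.Ico 1 s, ∑ j' ∈ Finset.Ioc j T with R j j',
        (pathsFrom m R T (j', -((m j : ZMod r) * (t : ZMod r)))).ncard := by
    exact_mod_cast h
  rw [Finset.sum_comm, pathCount, h']
  push_cast
  rfl

theorem sum_Ico_neg_mul [NeZero r] {M : Type*} [AddCommMonoid M] (f : ZMod r → M) {a : ℕ}
    (ha : a.gcd r = 1) :
    ∑ t ∈ Finset.Ico 1 r, f (-((a : ZMod r) * t)) = ∑ x with x ≠ 0, f x := by
  refine Finset.sum_bij (fun t _ => -((a : ZMod r) * t)) ?_ ?_ ?_ fun _ _ => rfl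
  · intro t ht
    rw [Finset.mem_Ico] at ht
    simpa only [Finset.mem_filter, Finset.mem_univ, true_and, neg_ne_zero] using
      natCast_mul_natCast_ne_zero ha ht.1 ht.2
  · intro t ht u hu h
    rw [Finset.mem_Ico] at ht hu
    have h1 : (t : ZMod r) = u :=
      ((ZMod.isUnit_iff_coprime a r).2 ha).mul_left_cancel (neg_injective h)
    rw [ZMod.natCast_eq_natCast_iff] at h1
    exact Nat.ModEq.eq_of_lt_of_lt h1 ht.2 hu.2
  · intro x hx
    rw [Finset.mem_filter] at hx
    obtain ⟨s, hs, hsr, rfl⟩ := exists_eq_neg_mul_natCast ha x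
    refine ⟨s, Finset.mem_Ico.2 ⟨hs, lt_of_le_of_ne hsr ?_⟩, rfl⟩
    rintro rfl
    exact hx.2 (by simp)

theorem sum_Ico_one_choose (s k : ℕ) (hk : 1 ≤ k) :
    ∑ t ∈ Finset.Ico 1 s, t.choose k = s.choose (k + 1) := by
  induction s with
  | zero => simp
  | succ s ih =>
    rcases Nat.eq_zero_or_pos s with rfl | hs
    · rw [Finset.Ico_self, Finset.sum_empty, Nat.choose_eq_zero_of_lt (by omega)]
    · rw [Finset.sum_Ico_succ_top hs, ih, Nat.choose_succ_succ' s k, add_comm]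

theorem pathCount_consecutive [NeZero r] [DecidableRel R] (hm : ∀ j, (m j).gcd r = 1)
    {i₀ i₁ i₂ i₃ : Fin n} (h₁ : (i₁ : ℕ) = i₀ + 1) (h₂ : (i₂ : ℕ) = i₀ + 2)
    (h₃ : (i₃ : ℕ) = i₀ + 3) (hR : ∀ j, R j j) (h01 : R i₀ i₁) (h12 : R i₁ i₂) (h23 : R i₂ i₃)
    {Q : Prop} [Decidable Q] (h02 : R i₀ i₂ ↔ Q) (h03 : R i₀ i₃ ↔ Q) (h13 : R i₁ i₃ ↔ Q)
    {w : ZMod r} (hw : w * m i₂ = 1) :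
    pathCount m R i₃ i₀ (0 : ZMod r) = w * m i₁ * (r.choose 3 : ℕ) := by
  have hr : 1 ≤ r := NeZero.one_le
  have sub_one {s : ℕ} (hs : 1 ≤ s) : ((s - 1 : ℕ) : ZMod r) = s - 1 := by
    rw [Nat.cast_sub hs, Nat.cast_one]
  have sum_id (s : ℕ) : ∑ t ∈ Finset.Ico 1 s, (t : ZMod r) = (s.choose 2 : ℕ) := by
    rw [← sum_Ico_one_choose s 1 le_rfl]
    simp
  have c₃ (x : ZMod r) : pathCount m R i₃ i₃ x = 1 := by
    obtain ⟨s, hs, hsr, rfl⟩ := exists_eq_neg_mul_natCast (hm i₃) x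
    rw [pathCount_neg_mul hR hm le_rfl hs hsr]
    simp [hR]
  have c₂' {s : ℕ} (hs : 1 ≤ s) (hsr : s ≤ r) :
      pathCount m R i₃ i₂ (-((m i₂ : ZMod r) * (s : ZMod r))) = s := by
    rw [pathCount_neg_mul hR hm (Fin.le_def.2 (by omega)) hs hsr,
      show Finset.Ioc i₂ i₃ = {i₃} by
        ext a; simp only [Finset.mem_Ioc, Finset.mem_singleton, Fin.ext_iff]; omega]
    simp [Finset.sum_filter, h23, c₃, sub_one hs]
  have c₂ (x : ZMod r) : pathCount m R i₃ i₂ x = -(w * x) := by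
    obtain ⟨s, hs, hsr, rfl⟩ := exists_eq_neg_mul_natCast (hm i₂) x
    rw [c₂' hs hsr]
    linear_combination -(s : ZMod r) * hw
  set ε : ZMod r := if Q then 1 else 0 with hε
  have c₁ {s : ℕ} (hs : 1 ≤ s) (hsr : s ≤ r) :
      pathCount m R i₃ i₁ (-((m i₁ : ZMod r) * (s : ZMod r))) =
        ε * s + w * m i₁ * (s.choose 2 : ℕ) := by
    rw [pathCount_neg_mul hR hm (Fin.le_def.2 (by omega)) hs hsr,
      show Finset.Ioc i₁ i₃ = {i₂, i₃} by
        ext a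
        simp only [Finset.mem_Ioc, Finset.mem_insert, Finset.mem_singleton, Fin.ext_iff]
        omega,
      Finset.sum_filter, Finset.sum_pair (by rw [Ne, Fin.ext_iff]; omega)]
    simp only [h12, h13, if_true, c₂, c₃, Finset.sum_const, Nat.card_Ico, nsmul_eq_mul,
      sub_one hs, ← sum_id s, Finset.mul_sum]
    rw [Finset.sum_congr rfl fun (t : ℕ) _ =>
      show -(w * -((m i₁ : ZMod r) * t)) = w * m i₁ * t by ring, hε]
    split_ifs <;> ring
  have c₀ : pathCount m R i₃ i₀ (-((m i₀ : ZMod r) * (r : ZMod r))) =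
      ε * r + ε * (r.choose 2 : ℕ) * 2 + w * m i₁ * (r.choose 3 : ℕ) := by
    rw [pathCount_neg_mul hR hm (Fin.le_def.2 (by omega)) hr le_rfl,
      show Finset.Ioc i₀ i₃ = {i₁, i₂, i₃} by
        ext a
        simp only [Finset.mem_Ioc, Finset.mem_insert, Finset.mem_singleton, Fin.ext_iff]
        omega,
      Finset.sum_filter, Finset.sum_insert (by simp [Fin.ext_iff]; omega),
      Finset.sum_pair (by rw [Ne, Fin.ext_iff]; omega),
      sum_Ico_neg_mul (pathCount m R i₃ i₁) (hm i₀), sum_Ico_neg_mul (pathCount m R i₃ i₂) (hm i₀),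
      ← sum_Ico_neg_mul (pathCount m R i₃ i₁) (hm i₁),
      ← sum_Ico_neg_mul (pathCount m R i₃ i₂) (hm i₂),
      Finset.sum_congr rfl fun t ht => c₁ (Finset.mem_Ico.1 ht).1 (Finset.mem_Ico.1 ht).2.le,
      Finset.sum_congr rfl fun t ht => c₂' (Finset.mem_Ico.1 ht).1 (Finset.mem_Ico.1 ht).2.le]
    simp only [h01, h02, h03, if_true, c₃, Finset.sum_const, Nat.card_Ico, nsmul_eq_mul,
      sub_one hr, Finset.sum_add_distrib, ← Finset.mul_sum, sum_id, ← Nat.cast_sum,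
      sum_Ico_one_choose r 2 one_le_two]
    rw [hε]
    split_ifs <;> ring
  have hr0 : (r : ZMod r) = 0 := ZMod.natCast_self r
  have h2 : ((r.choose 2 : ℕ) : ZMod r) * 2 = 0 := by
    have := congrArg (Nat.cast (R := ZMod r)) (Nat.add_one_mul_choose_eq (r - 1) 1)
    rw [Nat.sub_add_cancel hr] at this
    push_cast at this
    rw [hr0, zero_mul] at this
    exact this.symm
  rw [hr0, mul_zero, neg_zero] at c₀
  rw [c₀]
  linear_combination ε * h2

theorem natCast_choose_three_eq (hr : 2 ≤ r) {c : ℤ}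
    (hc : 3 * c = (r : ℤ) * ((r : ℤ) - 1) * ((r : ℤ) - 2)) :
    ((r.choose 3 : ℕ) : ZMod r) = -(c : ZMod r) := by
  obtain ⟨k, rfl⟩ := Nat.exists_eq_add_of_le' hr
  have h1 := Nat.add_one_mul_choose_eq (k + 1) 2
  have h2 := Nat.add_one_mul_choose_eq k 1
  rw [Nat.choose_one_right] at h2
  have h3 : c = 2 * ((k + 2).choose 3 : ℕ) := by
    zify at h1 h2
    push_cast at hc ⊢
    norm_num at h1 h2 ⊢
    refine mul_left_cancel₀ (three_ne_zero (α := ℤ)) ?_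
    linear_combination hc + 2 * h1 + ((k : ℤ) + 2) * h2
  have h4 := congrArg (Nat.cast (R := ZMod (k + 2))) h1
  rw [Nat.cast_mul, show k + 1 + 1 = k + 2 from rfl, ZMod.natCast_self, zero_mul] at h4
  rw [h3]
  push_cast at h4 ⊢
  linear_combination -h4

theorem zeroSimple_iff_mem_pathsFrom {p : List (Edge n r)} {i : Fin n} :
    (∃ h : p ≠ [], ZeroSimple n r m p ∧ esrc n r m (p.head h) = (i, 0) ∧
      ern n r (p.getLast h) = (T, 0)) ↔ p ∈ pathsFrom m (fun _ _ => True) T (i, 0) := by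
  constructor
  · rintro ⟨h, ⟨-, h1, -, h2, -⟩, h3, h4⟩
    exact ⟨h, h1, h3, h4, h2, fun _ _ => trivial⟩
  · rintro ⟨h, h1, h3, h4, h2, -⟩
    refine ⟨h, ⟨h, h1, ?_, h2, congrArg Prod.snd h4⟩, h3, h4⟩
    exact sub_eq_zero.1 (congrArg Prod.snd h3)

theorem zeroSimple_kStep_iff_mem_pathsFrom {p : List (Edge n r)} {i : Fin n}
    (hT : (T : ℕ) = i + 3) :
    (∃ h : p ≠ [], ZeroSimple n r m p ∧ KStep n r 3 p ∧ esrc n r m (p.head h) = (i, 0) ∧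
      ern n r (p.getLast h) = (T, 0)) ↔
      p ∈ pathsFrom m (fun a b => (b : ℕ) ≤ a + 1) T (i, 0) := by
  have key : p ∈ pathsFrom m (fun a b => (b : ℕ) ≤ a + 1) T (i, 0) ↔
      p ∈ pathsFrom m (fun _ _ => True) T (i, 0) ∧
        ∀ e ∈ p, (e.1.1.2 : ℕ) ≤ e.1.1.1 + 1 := by
    constructor
    · rintro ⟨h, h1, h2, h3, h4, h5⟩
      exact ⟨⟨h, h1, h2, h3, h4, fun _ _ => trivial⟩, h5⟩
    · rintro ⟨⟨h, h1, h2, h3, h4, -⟩, h5⟩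
      exact ⟨h, h1, h2, h3, h4, h5⟩
  rw [key]
  constructor
  · rintro ⟨h, hz, ⟨_, t, ht, ht0, ht3, -, hv⟩, hs, he⟩
    have hp := zeroSimple_iff_mem_pathsFrom.1 ⟨h, hz, hs, he⟩
    refine ⟨hp, (forall_adjacent_iff_forall_visited hp).2 fun c hc hc' => ?_⟩
    have e0 : t 0 = i := ht0.trans (congrArg Prod.fst hs)
    have e3 : t 3 = T := ht3.trans (congrArg Prod.fst he)
    have l01 : t 0 < t 1 := ht (by decide)
    have l12 : t 1 < t 2 := ht (by decide)
    have l23 : t 2 < t 3 := ht (by decide)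
    change i < c at hc
    have : c = t 1 ∨ c = t 2 ∨ c = T := by omega
    rcases this with rfl | rfl | rfl
    · exact hv 1 (by decide) (by decide)
    · exact hv 2 (by decide) (by decide)
    · exact ⟨_, List.getLast_mem h, congrArg Prod.fst he⟩
  · rintro ⟨hp, hadj⟩
    obtain ⟨h, hz, hs, he⟩ := zeroSimple_iff_mem_pathsFrom.2 hp
    have hv := (forall_adjacent_iff_forall_visited hp).1 hadj
    have hcol := (columns_le_of_mem_pathsFrom hp).2
    refine ⟨h, hz, ⟨h, fun q => ⟨i + q, by omega⟩, ?_, ?_, ?_, ?_, ?_⟩, hs, he⟩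
    · intro a b hab
      change (i : ℕ) + a < i + b
      omega
    · rw [show (p.head h).1.1.1 = i from congrArg Prod.fst hs]
      simp
    · rw [show (p.getLast h).1.1.2 = T from congrArg Prod.fst he]
      simp [Fin.ext_iff, hT]
    · intro e hep
      have h1 : i ≤ e.1.1.2 := (hcol e hep).1
      have h2 := (hcol e hep).2
      exact ⟨⟨e.1.1.2 - i, by omega⟩, by simp [Fin.ext_iff]; omega⟩
    · intro q hq hq'
      refine hv _ (Fin.lt_def.2 ?_) (Fin.le_def.2 ?_)
      · change (i : ℕ) < i + q
        omega
      · change (i : ℕ) + q ≤ T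
        omega

end QL

open QL in
/-- Lemma `l:PathsQuantum` (iii): in `L_{2n−1} ×_m ℤ_r`, the number of
`3`-step `0`-simple paths from `(v_i,0)` to `(v_{i+3},0)` is congruent to
`−m_{i+2}⁻¹ m_{i+1} · r(r−1)(r−2)/3` modulo `r`; consequently so is the total number
of `0`-simple paths from `(v_i,0)` to `(v_{i+3},0)`. -/
theorem stmt19 (n r : ℕ) (hr : 2 ≤ r) (m : Fin n → ℕ) (hm : ∀ i, 0 < m i)
    (hgcd : ∀ i, Nat.gcd (m i) r = 1)
    (i : Fin n) (hi : (i : ℕ) + 3 < n)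
    (minv : ℤ)
    (hminv : minv * (m ⟨(i : ℕ) + 2, by omega⟩ : ℤ) ≡ 1 [ZMOD (r : ℤ)])
    (c : ℤ) (hc : 3 * c = (r : ℤ) * ((r : ℤ) - 1) * ((r : ℤ) - 2)) :
    ((Nat.card {p : List (Edge n r) // ∃ h : p ≠ [], ZeroSimple n r m p ∧
        KStep n r 3 p ∧ esrc n r m (p.head h) = (i, 0) ∧
        ern n r (p.getLast h) = (⟨(i : ℕ) + 3, hi⟩, 0)} : ℤ)
      ≡ -(minv * (m ⟨(i : ℕ) + 1, by omega⟩ : ℤ) * c) [ZMOD (r : ℤ)]) ∧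
    ((Nat.card {p : List (Edge n r) // ∃ h : p ≠ [], ZeroSimple n r m p ∧
        esrc n r m (p.head h) = (i, 0) ∧
        ern n r (p.getLast h) = (⟨(i : ℕ) + 3, hi⟩, 0)} : ℤ)
      ≡ -(minv * (m ⟨(i : ℕ) + 1, by omega⟩ : ℤ) * c) [ZMOD (r : ℤ)]) := by
  have : NeZero r := ⟨by omega⟩
  have hw : (minv : ZMod r) * (m ⟨(i : ℕ) + 2, by omega⟩ : ZMod r) = 1 := by
    have := (ZMod.intCast_eq_intCast_iff _ _ r).2 hminv
    push_cast at this
    exact this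
  have hC := natCast_choose_three_eq hr hc
  constructor
  · rw [← ZMod.intCast_eq_intCast_iff]
    have h := pathCount_consecutive (R := fun a b : Fin n => (b : ℕ) ≤ a + 1) (Q := False)
      hgcd (i₀ := i) (i₁ := ⟨i + 1, by omega⟩) (i₂ := ⟨i + 2, by omega⟩) (i₃ := ⟨i + 3, hi⟩)
      rfl rfl rfl (by simp) (by simp) (by simp) (by simp) (by simp) (by simp) (by simp) hw
    simp only [zeroSimple_kStep_iff_mem_pathsFrom (T := ⟨(i : ℕ) + 3, hi⟩) rfl]
    rw [pathCount, hC] at h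
    push_cast
    exact h.trans (by ring)
  · rw [← ZMod.intCast_eq_intCast_iff]
    have h := pathCount_consecutive (R := fun _ _ : Fin n => True) (Q := True)
      hgcd (i₀ := i) (i₁ := ⟨i + 1, by omega⟩) (i₂ := ⟨i + 2, by omega⟩) (i₃ := ⟨i + 3, hi⟩)
      rfl rfl rfl (by simp) trivial trivial trivial Iff.rfl Iff.rfl Iff.rfl hw
    simp only [zeroSimple_iff_mem_pathsFrom]
    rw [pathCount, hC] at h
    push_cast
    exact h.trans (by ring)
end
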